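/- Let Λ be a unimodular lattice in ℝ^d with dual lattice Λ*, and let f(τ) = |τ|_+ = max_i τ_i. Then ψ̲_1(Λ,f) ≤ ψ̲_1(Λ*,f)/(d−1)². -/

import Mathlib

open Filter

noncomputable section

/-- A unimodular lattice in `ℝ^d`: the set of integer linear combinations of a basis of `ℝ^d`
whose matrix has determinant `±1`. -/
def IsUnimodularLattice (d : ℕ) (Λ : Set (Fin d → ℝ)) : Prop :=
  ∃ B : Matrix (Fin d) (Fin d) ℝ, |B.det| = 1 ∧
    Λ = {v | ∃ x : Fin d → ℤ, v = B.mulVec fun i => (x i : ℝ)}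

/-- The dual lattice `Λ* = {w : ⟨w, z⟩ ∈ ℤ for all z ∈ Λ}`. -/
def dualLattice (d : ℕ) (Λ : Set (Fin d → ℝ)) : Set (Fin d → ℝ) :=
  {w | ∀ z ∈ Λ, ∃ c : ℤ, ∑ i, w i * z i = (c : ℝ)}

/-- The `k`-th successive minimum `λ_k(B_τ, Λ)` of the box
`B_τ = {z : |z_i| ≤ exp (τ i)}` with respect to the lattice `Λ`. -/
def succMin (d : ℕ) (Λ : Set (Fin d → ℝ)) (τ : Fin d → ℝ) (k : ℕ) : ℝ :=
  sInf {lam : ℝ | 0 < lam ∧ ∃ v : Fin k → (Fin d → ℝ),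
    (∀ l, v l ∈ Λ) ∧ LinearIndependent ℝ v ∧ ∀ l i, |v l i| ≤ lam * Real.exp (τ i)}

/-- `L_k(Λ, τ) = log λ_k(B_τ, Λ)`. -/
def Lk (d : ℕ) (Λ : Set (Fin d → ℝ)) (τ : Fin d → ℝ) (k : ℕ) : ℝ :=
  Real.log (succMin d Λ τ k)

/-- The filter on `ℝ^d` of `τ ∈ T` (i.e. `∑ τ_i = 0`) with `|τ| = max_i |τ_i| → ∞`. -/
def Tfilter (d : ℕ) : Filter (Fin d → ℝ) :=
  (Filter.atTop.comap fun τ : Fin d → ℝ => ⨆ i, |τ i|) ⊓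
    Filter.principal {τ | ∑ i, τ i = 0}

/-- `ψ̲_k(Λ, f)` for `f(τ) = |τ|_+ = max_i τ_i`: the liminf of `L_k(Λ,τ)/|τ|_+` over
`τ ∈ T` with `|τ| → ∞`. -/
def psiLowF (d : ℕ) (Λ : Set (Fin d → ℝ)) (k : ℕ) : ℝ :=
  liminf (fun τ : Fin d → ℝ => Lk d Λ τ k / ⨆ i, τ i) (Tfilter d)

/-- `ψ̄_k(Λ, f)` for `f(τ) = |τ|_+ = max_i τ_i`: the limsup of `L_k(Λ,τ)/|τ|_+` over
`τ ∈ T` with `|τ| → ∞`. -/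
def psiUpF (d : ℕ) (Λ : Set (Fin d → ℝ)) (k : ℕ) : ℝ :=
  limsup (fun τ : Fin d → ℝ => Lk d Λ τ k / ⨆ i, τ i) (Tfilter d)

/-- Minkowski's linear forms theorem. -/
theorem minkowski_forms (d : ℕ) (M : Matrix (Fin d) (Fin d) ℝ) (hM : M.det ≠ 0)
    (c : Fin d → ℝ) (hc : ∀ i, 0 < c i) (h : |M.det| < ∏ i, c i) :
    ∃ x : Fin d → ℤ, x ≠ 0 ∧ ∀ i, |M.mulVec (fun i => (x i : ℝ)) i| < c i := by
  classical
  let P : Set (Fin d → ℝ) := Set.pi Set.univ fun i => Set.Ioo (-c i) (c i)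
  let S : Set (Fin d → ℝ) := (Matrix.toLin' M) ⁻¹' P
  have hdet : LinearMap.det (Matrix.toLin' M) ≠ 0 := by
    rwa [LinearMap.det_toLin']
  have hPvol : MeasureTheory.volume P = ENNReal.ofReal (∏ i, (2 * c i)) := by
    simp only [P]
    rw [Real.volume_pi_Ioo, ENNReal.ofReal_prod_of_nonneg]
    · apply Finset.prod_congr rfl
      intro i _
      congr 1
      ring
    · intro i _
      have := hc i
      positivity
  have hvol : MeasureTheory.volume S = ENNReal.ofReal (|M.det|⁻¹ * ∏ i, (2 * c i)) := by
    simp only [S]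
    rw [MeasureTheory.Measure.addHaar_preimage_linearMap _ hdet, hPvol, LinearMap.det_toLin',
      ← ENNReal.ofReal_mul (abs_nonneg _), abs_inv]
  have hconvP : Convex ℝ P := convex_pi fun i _ => convex_Ioo _ _
  have hconv : Convex ℝ S := hconvP.linear_preimage _
  have hsymm : ∀ x ∈ S, -x ∈ S := by
    intro x hx
    simp only [S, P, Set.mem_preimage, Set.mem_pi, Set.mem_univ, true_imp_iff, Set.mem_Ioo,
      map_neg, Pi.neg_apply] at hx ⊢
    intro i
    have := hx i
    constructor <;> linarith [this.1, this.2]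
  let b := Pi.basisFun ℝ (Fin d)
  have fund : MeasureTheory.IsAddFundamentalDomain (Submodule.span ℤ (Set.range b)).toAddSubgroup
      (ZSpan.fundamentalDomain b) MeasureTheory.volume :=
    ZSpan.isAddFundamentalDomain b MeasureTheory.volume
  have hF : MeasureTheory.volume (ZSpan.fundamentalDomain b) = 1 := by
    simp only [b]
    rw [ZSpan.fundamentalDomain_pi_basisFun, Real.volume_pi_Ico]
    simp
  have hlt : MeasureTheory.volume (ZSpan.fundamentalDomain b) * 2 ^ Module.finrank ℝ (Fin d → ℝ)
      < MeasureTheory.volume S := by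
    rw [hF, hvol, one_mul, Module.finrank_fin_fun, Finset.prod_mul_distrib]
    have hpos : 0 < |M.det| := abs_pos.mpr hM
    have e : (2 : ENNReal) ^ d = ENNReal.ofReal (2 ^ d) := by
      rw [ENNReal.ofReal_pow (by norm_num)]; simp
    rw [e]
    have key : (2:ℝ) ^ d < |M.det|⁻¹ * ((∏ i : Fin d, (2:ℝ)) * ∏ i, c i) := by
      simp only [Finset.prod_const, Finset.card_univ, Fintype.card_fin]
      rw [inv_mul_eq_div, lt_div_iff₀ hpos]
      exact mul_lt_mul_of_pos_left h (by positivity)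
    exact (ENNReal.ofReal_lt_ofReal_iff (lt_trans (by positivity) key)).2 key
  have : Countable (Submodule.span ℤ (Set.range b)).toAddSubgroup := by
    change Countable (Submodule.span ℤ (Set.range b))
    infer_instance
  obtain ⟨x, hx0, hxS⟩ := MeasureTheory.exists_ne_zero_mem_lattice_of_measure_mul_two_pow_lt_measure
    fund hsymm hconv hlt
  have hxm : (x : Fin d → ℝ) ∈ Submodule.span ℤ (Set.range b) := x.2
  rw [b.mem_span_iff_repr_mem ℤ] at hxm
  choose y hy using hxm
  have hxy : (x : Fin d → ℝ) = fun i => (y i : ℝ) := by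
    funext i
    have := hy i
    simp [b] at this
    exact this.symm
  refine ⟨y, ?_, ?_⟩
  · rintro rfl
    apply hx0
    apply Subtype.ext
    rw [hxy]
    funext i
    simp
  · intro i
    rw [hxy] at hxS
    simp only [S, P, Set.mem_preimage, Set.mem_pi, Set.mem_univ, true_imp_iff, Set.mem_Ioo,
      Matrix.toLin'_apply] at hxS
    exact abs_lt.2 (hxS i)

theorem dual_unimodular (d : ℕ) (Λ : Set (Fin d → ℝ)) (h : IsUnimodularLattice d Λ) :
    IsUnimodularLattice d (dualLattice d Λ) := by
  classical
  obtain ⟨B, hB, rfl⟩ := h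
  have hu : IsUnit B.det := by
    rw [isUnit_iff_ne_zero]; intro h0; rw [h0] at hB; simp at hB
  have huT : IsUnit B.transpose.det := by rwa [Matrix.det_transpose]
  have key : ∀ (w : Fin d → ℝ) (x : Fin d → ℝ),
      ∑ i, w i * B.mulVec x i = ∑ i, B.transpose.mulVec w i * x i := by
    intro w x
    change w ⬝ᵥ B.mulVec x = B.transpose.mulVec w ⬝ᵥ x
    rw [Matrix.dotProduct_mulVec, Matrix.mulVec_transpose]
  refine ⟨B.transpose⁻¹, ?_, ?_⟩
  · rw [Matrix.det_nonsing_inv, Matrix.det_transpose, Ring.inverse_eq_inv', abs_inv, hB, inv_one]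
  · ext w
    constructor
    · intro hw
      have : ∀ i, ∃ c : ℤ, B.transpose.mulVec w i = c := by
        intro i
        obtain ⟨c, hc⟩ := hw (B.mulVec fun k => ((Pi.single i 1 : Fin d → ℤ) k : ℝ)) ⟨_, rfl⟩
        refine ⟨c, ?_⟩
        rw [← hc, key, Finset.sum_eq_single i]
        · simp
        · intro j _ hj
          simp [hj]
        · simp
      choose y hy using this
      refine ⟨y, ?_⟩
      have : (fun i => (y i : ℝ)) = B.transpose.mulVec w := by
        funext i; rw [hy]
      rw [this, Matrix.mulVec_mulVec, Matrix.nonsing_inv_mul _ huT, Matrix.one_mulVec]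
    · rintro ⟨y, rfl⟩ z ⟨x, rfl⟩
      refine ⟨∑ i, y i * x i, ?_⟩
      rw [key, Matrix.mulVec_mulVec, Matrix.mul_nonsing_inv _ huT, Matrix.one_mulVec]
      push_cast
      rfl

/-- The set whose infimum defines the first minimum. -/
theorem succMin_one_le (d : ℕ) (Λ : Set (Fin d → ℝ)) (τ : Fin d → ℝ) (lam : ℝ) (hl : 0 < lam)
    (v : Fin d → ℝ) (hv : v ∈ Λ) (hv0 : v ≠ 0) (h : ∀ i, |v i| ≤ lam * Real.exp (τ i)) :
    succMin d Λ τ 1 ≤ lam := by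
  apply csInf_le ⟨0, fun x hx => hx.1.le⟩
  refine ⟨hl, fun _ => v, fun _ => hv, ?_, fun _ => h⟩
  exact LinearIndependent.of_subsingleton 0 hv0

theorem mem_small (d : ℕ) (Λ : Set (Fin d → ℝ)) (h : IsUnimodularLattice d Λ) (τ : Fin d → ℝ)
    (hτ : ∑ i, τ i = 0) (lam : ℝ) (hl : 1 < lam) (hd : 0 < d) :
    ∃ v ∈ Λ, v ≠ 0 ∧ ∀ i, |v i| ≤ lam * Real.exp (τ i) := by
  obtain ⟨B, hB, rfl⟩ := h
  have hu : B.det ≠ 0 := by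
    intro h0; rw [h0] at hB; simp at hB
  obtain ⟨x, hx0, hx⟩ := minkowski_forms d B hu (fun i => lam * Real.exp (τ i))
    (fun i => by positivity) (by
      rw [hB, Finset.prod_mul_distrib, ← Real.exp_sum, hτ]
      simpa using one_lt_pow₀ hl hd.ne')
  refine ⟨_, ⟨x, rfl⟩, ?_, fun i => (hx i).le⟩
  intro h0
  apply hx0
  have := Matrix.eq_zero_of_mulVec_eq_zero hu h0
  funext i
  simpa using congrFun this i

theorem succMin_le_one (d : ℕ) (Λ : Set (Fin d → ℝ)) (h : IsUnimodularLattice d Λ)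
    (τ : Fin d → ℝ) (hτ : ∑ i, τ i = 0) (hd : 0 < d) : succMin d Λ τ 1 ≤ 1 := by
  apply le_of_forall_gt_imp_ge_of_dense
  intro lam hl
  obtain ⟨v, hv, hv0, hh⟩ := mem_small d Λ h τ hτ lam hl hd
  exact succMin_one_le d Λ τ lam (by linarith) v hv hv0 hh

theorem succMin_set_nonempty (d : ℕ) (Λ : Set (Fin d → ℝ)) (h : IsUnimodularLattice d Λ)
    (τ : Fin d → ℝ) (hτ : ∑ i, τ i = 0) (hd : 0 < d) :
    {lam : ℝ | 0 < lam ∧ ∃ v : Fin 1 → (Fin d → ℝ),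
    (∀ l, v l ∈ Λ) ∧ LinearIndependent ℝ v ∧ ∀ l i, |v l i| ≤ lam * Real.exp (τ i)}.Nonempty := by
  obtain ⟨v, hv, hv0, hh⟩ := mem_small d Λ h τ hτ 2 (by norm_num) hd
  exact ⟨2, by norm_num, fun _ => v, fun _ => hv, LinearIndependent.of_subsingleton 0 hv0,
    fun _ => hh⟩

/-- Lower bound for the first minimum. -/
theorem succMin_lower (d : ℕ) (Λ : Set (Fin d → ℝ)) (h : IsUnimodularLattice d Λ) (hd : 0 < d) :
    ∃ c : ℝ, 0 < c ∧ ∀ τ : Fin d → ℝ, ∑ i, τ i = 0 →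
      c * Real.exp (-(⨆ i, τ i)) ≤ succMin d Λ τ 1 := by
  classical
  have hΛ := h
  obtain ⟨B, hB, rfl⟩ := h
  have hu : IsUnit B.det := by
    rw [isUnit_iff_ne_zero]; intro h0; rw [h0] at hB; simp at hB
  let K : ℝ := ∑ i, ∑ j, |B⁻¹ i j|
  have hK : 0 ≤ K := Finset.sum_nonneg fun i _ => Finset.sum_nonneg fun j _ => abs_nonneg _
  refine ⟨(K + 1)⁻¹, by positivity, ?_⟩
  intro τ hτ
  apply le_csInf (succMin_set_nonempty d _ hΛ τ hτ hd)
  rintro lam ⟨hl, v, hv, hli, hb⟩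
  obtain ⟨x, hx⟩ := hv 0
  have hv0 : v 0 ≠ 0 := hli.ne_zero 0
  have hx0 : ∃ i, x i ≠ 0 := by
    by_contra hcon
    push Not at hcon
    apply hv0
    rw [hx]
    have : (fun i => (x i : ℝ)) = 0 := by funext i; simp [hcon i]
    rw [this, Matrix.mulVec_zero]
  obtain ⟨i, hi⟩ := hx0
  have hxi : (x i : ℝ) = ∑ j, B⁻¹ i j * v 0 j := by
    have : B⁻¹.mulVec (v 0) = fun i => (x i : ℝ) := by
      rw [hx, Matrix.mulVec_mulVec, Matrix.nonsing_inv_mul _ hu, Matrix.one_mulVec]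
    exact (congrFun this i).symm
  have h1 : (1 : ℝ) ≤ |(x i : ℝ)| := by
    exact_mod_cast Int.one_le_abs hi
  set E := Real.exp (⨆ i, τ i) with hE
  have hbd : ∀ j, |v 0 j| ≤ lam * E := by
    intro j
    refine (hb 0 j).trans ?_
    have : τ j ≤ ⨆ i, τ i := le_ciSup (Set.finite_range τ).bddAbove j
    have := Real.exp_le_exp.2 this
    gcongr
  have h2 : |(x i : ℝ)| ≤ K * (lam * E) := by
    rw [hxi]
    calc |∑ j, B⁻¹ i j * v 0 j| ≤ ∑ j, |B⁻¹ i j * v 0 j| := Finset.abs_sum_le_sum_abs _ _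
      _ ≤ ∑ j, |B⁻¹ i j| * (lam * E) := by
        apply Finset.sum_le_sum
        intro j _
        rw [abs_mul]
        exact mul_le_mul_of_nonneg_left (hbd j) (abs_nonneg _)
      _ = (∑ j, |B⁻¹ i j|) * (lam * E) := by rw [Finset.sum_mul]
      _ ≤ K * (lam * E) := by
        apply mul_le_mul_of_nonneg_right _ (by positivity)
        exact Finset.single_le_sum (f := fun i => ∑ j, |B⁻¹ i j|)
          (fun i _ => Finset.sum_nonneg fun j _ => abs_nonneg _) (Finset.mem_univ i)
  have hEpos : 0 < E := Real.exp_pos _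
  rw [Real.exp_neg, ← mul_inv, inv_le_iff_one_le_mul₀ (by positivity)]
  have : 0 < lam * E := by positivity
  nlinarith

/-- Transference. -/
theorem transfer (d : ℕ) (hd : 2 ≤ d) (Λ : Set (Fin d → ℝ)) (h : IsUnimodularLattice d Λ)
    (τ : Fin d → ℝ) (hτ : ∑ i, τ i = 0) (w : Fin d → ℝ) (hw : w ∈ dualLattice d Λ) (hw0 : w ≠ 0)
    (lam nu : ℝ) (hnu : 0 < nu) (hln : lam < nu ^ (d - 1))
    (hwb : ∀ i, |w i| ≤ lam * Real.exp (τ i)) :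
    succMin d Λ (-τ) 1 ≤ ((d : ℝ) - 1) * nu := by
  classical
  obtain ⟨B, hB, rfl⟩ := h
  have hu : B.det ≠ 0 := by
    intro h0; rw [h0] at hB; simp at hB
  have hd1 : (1 : ℝ) ≤ (d : ℝ) - 1 := by
    have : (2 : ℝ) ≤ d := by exact_mod_cast hd
    linarith
  have : Nonempty (Fin d) := ⟨⟨0, by omega⟩⟩
  obtain ⟨j, hj⟩ := Finite.exists_max fun i => |w i| * Real.exp (-τ i)
  have hwj : w j ≠ 0 := by
    intro h0
    apply hw0
    funext i
    have h1 := hj i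
    rw [h0, abs_zero, zero_mul] at h1
    have h2 := Real.exp_pos (-τ i)
    have : |w i| ≤ 0 := by
      by_contra hc
      push Not at hc
      have := mul_pos hc h2
      linarith
    simpa using this
  let A : Matrix (Fin d) (Fin d) ℝ := (1 : Matrix (Fin d) (Fin d) ℝ).updateRow j w
  have hA : A.det = w j := by
    have := Matrix.cramer_transpose_apply (1 : Matrix (Fin d) (Fin d) ℝ) w j
    rw [Matrix.transpose_one, Matrix.cramer_one] at this
    simpa [A] using this.symm
  have hAB : |(A * B).det| = |w j| := by
    rw [Matrix.det_mul, abs_mul, hB, hA, mul_one]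
  let c : Fin d → ℝ := Function.update (fun i => nu * Real.exp (-τ i)) j 1
  have hcj : c j = 1 := by simp [c]
  have hci : ∀ i, i ≠ j → c i = nu * Real.exp (-τ i) := fun i hi => by simp [c, hi]
  have hcpos : ∀ i, 0 < c i := by
    intro i
    by_cases hi : i = j
    · rw [hi, hcj]; norm_num
    · rw [hci i hi]; positivity
  have hprod : ∏ i, c i = nu ^ (d - 1) * Real.exp (τ j) := by
    rw [← Finset.mul_prod_erase Finset.univ c (Finset.mem_univ j), hcj, one_mul]
    rw [Finset.prod_congr rfl (fun i hi => hci i (Finset.ne_of_mem_erase hi)),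
      Finset.prod_mul_distrib, Finset.prod_const, Finset.card_erase_of_mem (Finset.mem_univ j),
      Finset.card_univ, Fintype.card_fin, ← Real.exp_sum]
    congr 2
    rw [Finset.sum_neg_distrib]
    have := Finset.add_sum_erase Finset.univ τ (Finset.mem_univ j)
    linarith
  obtain ⟨x, hx0, hx⟩ := minkowski_forms d (A * B)
    (by rw [← abs_pos, hAB]; exact abs_pos.2 hwj) c hcpos (by
      rw [hAB, hprod]
      exact (hwb j).trans_lt (mul_lt_mul_of_pos_right hln (Real.exp_pos _)))
  set v := B.mulVec (fun i => (x i : ℝ)) with hv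
  have hvΛ : v ∈ {v | ∃ x : Fin d → ℤ, v = B.mulVec fun i => (x i : ℝ)} := ⟨x, rfl⟩
  have hv0 : v ≠ 0 := by
    intro h0
    apply hx0
    have := Matrix.eq_zero_of_mulVec_eq_zero hu h0
    funext i
    simpa using congrFun this i
  have hrow : ∀ i, i ≠ j → |v i| < nu * Real.exp (-τ i) := by
    intro i hi
    have := hx i
    rw [hci i hi, ← Matrix.mulVec_mulVec] at this
    have e : A.mulVec v i = v i := by
      simp only [Matrix.mulVec, A, Matrix.updateRow_ne hi]
      change (1 : Matrix (Fin d) (Fin d) ℝ).mulVec v i = v i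
      rw [Matrix.one_mulVec]
    rwa [← hv, e] at this
  have hzero : ∑ i, w i * v i = 0 := by
    have := hx j
    rw [hcj, ← Matrix.mulVec_mulVec] at this
    have e : A.mulVec v j = ∑ i, w i * v i := by
      simp only [Matrix.mulVec, A, Matrix.updateRow_self, dotProduct]
    rw [← hv, e] at this
    obtain ⟨m, hm⟩ := hw v hvΛ
    rw [hm] at this ⊢
    have h1 : |m| < 1 := by exact_mod_cast this
    rw [Int.abs_lt_one_iff.1 h1]
    simp
  refine succMin_one_le d _ (-τ) _ (by positivity) v hvΛ hv0 ?_
  intro i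
  rw [Pi.neg_apply]
  by_cases hi : i = j
  · subst hi
    have hs := Finset.add_sum_erase Finset.univ (fun i => w i * v i) (Finset.mem_univ i)
    rw [hzero] at hs
    have e1 : |w i| * |v i| = |∑ k ∈ Finset.univ.erase i, w k * v k| := by
      rw [← abs_mul, ← abs_neg]
      congr 1
      linarith
    have e2 : |∑ k ∈ Finset.univ.erase i, w k * v k|
        ≤ ∑ k ∈ Finset.univ.erase i, |w i| * Real.exp (-τ i) * nu := by
      refine (Finset.abs_sum_le_sum_abs _ _).trans (Finset.sum_le_sum ?_)
      intro k hk
      have a1 := hrow k (Finset.ne_of_mem_erase hk)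
      rw [abs_mul]
      calc |w k| * |v k| ≤ |w k| * (nu * Real.exp (-τ k)) :=
            mul_le_mul_of_nonneg_left a1.le (abs_nonneg _)
        _ = (|w k| * Real.exp (-τ k)) * nu := by ring
        _ ≤ _ := mul_le_mul_of_nonneg_right (hj k) hnu.le
    rw [Finset.sum_const, Finset.card_erase_of_mem (Finset.mem_univ i), Finset.card_univ,
      Fintype.card_fin, nsmul_eq_mul, Nat.cast_sub (by omega), Nat.cast_one, ← e1] at e2
    have hpos : 0 < |w i| := abs_pos.2 hwj
    refine le_of_mul_le_mul_left (e2.trans (le_of_eq ?_)) hpos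
    ring
  · have h1 := (hrow i hi).le
    have h2 : 0 < nu * Real.exp (-τ i) := by positivity
    nlinarith

theorem transfer_log (d : ℕ) (hd : 2 ≤ d) (Λ : Set (Fin d → ℝ)) (h : IsUnimodularLattice d Λ)
    (τ : Fin d → ℝ) (hτ : ∑ i, τ i = 0) :
    Lk d Λ (-τ) 1 ≤ (Real.log ((d : ℝ) - 1) + Real.log 2 / ((d : ℝ) - 1))
      + Lk d (dualLattice d Λ) τ 1 / ((d : ℝ) - 1) := by
  have hd1 : (1 : ℝ) ≤ (d : ℝ) - 1 := by
    have : (2 : ℝ) ≤ d := by exact_mod_cast hd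
    linarith
  have hD := dual_unimodular d Λ h
  obtain ⟨c, hc, hcl⟩ := succMin_lower d _ hD (by omega)
  obtain ⟨c', hc', hcl'⟩ := succMin_lower d _ h (by omega)
  have hs : 0 < succMin d (dualLattice d Λ) τ 1 := lt_of_lt_of_le (by positivity) (hcl τ hτ)
  have hs' : 0 < succMin d Λ (-τ) 1 :=
    lt_of_lt_of_le (by positivity) (hcl' (-τ) (by simp [hτ]))
  set s := succMin d (dualLattice d Λ) τ 1 with hsdef
  obtain ⟨lam, ⟨hl, w, hw, hli, hb⟩, hlt⟩ := exists_lt_of_csInf_lt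
    (succMin_set_nonempty d _ hD τ hτ (by omega)) (show _ < 2 * s by
      change s < 2 * s
      linarith)
  have hcast : ((d - 1 : ℕ) : ℝ) = (d : ℝ) - 1 := by
    rw [Nat.cast_sub (by omega), Nat.cast_one]
  have hpow : ((2 * s) ^ (((d - 1 : ℕ) : ℝ)⁻¹)) ^ (d - 1) = 2 * s :=
    Real.rpow_inv_natCast_pow (by positivity) (by omega)
  have hT := transfer d hd Λ h τ hτ (w 0) (hw 0) (hli.ne_zero 0) lam
    ((2 * s) ^ (((d - 1 : ℕ) : ℝ)⁻¹)) (by positivity) (by rw [hpow]; exact hlt) (hb 0)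
  have hlog := Real.log_le_log hs' hT
  rw [Real.log_mul (by linarith) (by positivity), Real.log_rpow (by positivity),
    Real.log_mul (by norm_num) hs.ne', hcast] at hlog
  unfold Lk
  rw [← hsdef]
  refine hlog.trans (le_of_eq ?_)
  field_simp
  ring

theorem sup_bounds (d : ℕ) (hd : 2 ≤ d) (τ : Fin d → ℝ) (hτ : ∑ i, τ i = 0) :
    (∀ i, -τ i ≤ ((d : ℝ) - 1) * ⨆ i, τ i) ∧ 0 ≤ ⨆ i, τ i := by
  have hle : ∀ i, τ i ≤ ⨆ i, τ i := fun i => le_ciSup (Set.finite_range τ).bddAbove i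
  constructor
  · intro i
    have h1 := Finset.add_sum_erase Finset.univ τ (Finset.mem_univ i)
    have h2 : ∑ k ∈ Finset.univ.erase i, τ k ≤ ∑ k ∈ Finset.univ.erase i, ⨆ i, τ i :=
      Finset.sum_le_sum fun k _ => hle k
    rw [Finset.sum_const, Finset.card_erase_of_mem (Finset.mem_univ i), Finset.card_univ,
      Fintype.card_fin, nsmul_eq_mul, Nat.cast_sub (by omega), Nat.cast_one] at h2
    linarith
  · have h2 : ∑ k, τ k ≤ ∑ k : Fin d, ⨆ i, τ i := Finset.sum_le_sum fun k _ => hle k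
    rw [hτ, Finset.sum_const, Finset.card_univ, Fintype.card_fin, nsmul_eq_mul] at h2
    have : (0 : ℝ) < d := by exact_mod_cast (by omega : 0 < d)
    exact nonneg_of_mul_nonneg_right h2 this

theorem mem_Tfilter (d : ℕ) : ∀ᶠ τ in Tfilter d, ∑ i, τ i = 0 :=
  (show {τ : Fin d → ℝ | ∑ i, τ i = 0} ∈ Tfilter d from
    mem_inf_of_right (mem_principal_self _))

theorem tendsto_absmax (d : ℕ) :
    Tendsto (fun τ : Fin d → ℝ => ⨆ i, |τ i|) (Tfilter d) atTop :=
  tendsto_comap.mono_left inf_le_left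

theorem tendsto_sup (d : ℕ) (hd : 2 ≤ d) :
    Tendsto (fun τ : Fin d → ℝ => ⨆ i, τ i) (Tfilter d) atTop := by
  have hd1 : (1 : ℝ) ≤ (d : ℝ) - 1 := by
    have : (2 : ℝ) ≤ d := by exact_mod_cast hd
    linarith
  have : Nonempty (Fin d) := ⟨⟨0, by omega⟩⟩
  refine tendsto_atTop_mono' _ ?_ ((tendsto_absmax d).atTop_div_const
    (show 0 < (d : ℝ) - 1 by linarith))
  filter_upwards [mem_Tfilter d] with τ hτ
  obtain ⟨h1, h2⟩ := sup_bounds d hd τ hτ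
  rw [div_le_iff₀ (by linarith)]
  apply ciSup_le
  intro i
  have hle : τ i ≤ ⨆ i, τ i := le_ciSup (Set.finite_range τ).bddAbove i
  rw [abs_le]
  constructor
  · linarith [h1 i]
  · nlinarith

theorem tendsto_neg_T (d : ℕ) : Tendsto (fun τ : Fin d → ℝ => -τ) (Tfilter d) (Tfilter d) := by
  rw [Tfilter, tendsto_inf, tendsto_comap_iff, tendsto_principal]
  constructor
  · have := tendsto_absmax d
    simpa [Function.comp_def, Tfilter] using this
  · filter_upwards [mem_Tfilter d] with τ hτ
    simp [hτ]

theorem neBot_T (d : ℕ) (hd : 2 ≤ d) : (Tfilter d).NeBot := by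
  classical
  let i0 : Fin d := ⟨0, by omega⟩
  let i1 : Fin d := ⟨1, by omega⟩
  have hne : i0 ≠ i1 := by simp [i0, i1]
  have : Tendsto (fun t : ℝ => (Pi.single i0 t - Pi.single i1 t : Fin d → ℝ)) atTop
      (Tfilter d) := by
    rw [Tfilter, tendsto_inf, tendsto_comap_iff, tendsto_principal]
    constructor
    · refine tendsto_atTop_mono (fun t => ?_) tendsto_id
      let τ : Fin d → ℝ := Pi.single i0 t - Pi.single i1 t
      have h1 : |τ i0| ≤ ⨆ i, |τ i| :=
        le_ciSup (f := fun i => |τ i|) (Set.finite_range _).bddAbove i0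
      have h2 : τ i0 = t := by simp [τ, hne]
      rw [h2] at h1
      exact (le_abs_self t).trans h1
    · refine Eventually.of_forall fun t => ?_
      simp [Finset.sum_sub_distrib]
  exact this.neBot

theorem stmt17 (d : ℕ) (hd : 2 ≤ d) (Λ : Set (Fin d → ℝ))
    (hΛ : IsUnimodularLattice d Λ) :
    psiLowF d Λ 1 ≤ psiLowF d (dualLattice d Λ) 1 / ((d : ℝ) - 1) ^ 2 := by
  have hd1 : (1 : ℝ) ≤ (d : ℝ) - 1 := by
    have : (2 : ℝ) ≤ d := by exact_mod_cast hd
    linarith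
  have : Nonempty (Fin d) := ⟨⟨0, by omega⟩⟩
  have hNB := neBot_T d hd
  have hD := dual_unimodular d Λ hΛ
  have hLD : ∀ τ : Fin d → ℝ, ∑ i, τ i = 0 → Lk d (dualLattice d Λ) τ 1 ≤ 0 := by
    intro τ hτ
    obtain ⟨c, hc, hcl⟩ := succMin_lower d _ hD (by omega)
    exact Real.log_nonpos (le_trans (by positivity) (hcl τ hτ))
      (succMin_le_one d _ hD τ hτ (by omega))
  have hFb : IsBoundedUnder (· ≥ ·) (Tfilter d)
      (fun τ : Fin d → ℝ => Lk d Λ τ 1 / ⨆ i, τ i) := by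
    obtain ⟨c, hc, hcl⟩ := succMin_lower d _ hΛ (by omega)
    refine ⟨-2, ?_⟩
    rw [eventually_map]
    filter_upwards [mem_Tfilter d, (tendsto_sup d hd).eventually_ge_atTop (max 1 (-Real.log c))]
      with τ hτ hf
    have hf1 := (le_max_left _ _).trans hf
    have hf2 := (le_max_right _ _).trans hf
    have h1 := Real.log_le_log (by positivity) (hcl τ hτ)
    rw [Real.log_mul hc.ne' (Real.exp_pos _).ne', Real.log_exp] at h1
    change -2 ≤ _
    rw [le_div_iff₀ (by linarith)]
    unfold Lk
    linarith
  have hGc : IsCoboundedUnder (· ≥ ·) (Tfilter d)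
      (fun τ : Fin d → ℝ => Lk d (dualLattice d Λ) τ 1 / ⨆ i, τ i) := by
    apply IsBoundedUnder.isCoboundedUnder_ge
    refine ⟨0, ?_⟩
    rw [eventually_map]
    filter_upwards [mem_Tfilter d] with τ hτ
    exact div_nonpos_of_nonpos_of_nonneg (hLD τ hτ) (sup_bounds d hd τ hτ).2
  set C := Real.log ((d : ℝ) - 1) + Real.log 2 / ((d : ℝ) - 1) with hC
  rw [le_div_iff₀ (by positivity)]
  have key : ∀ ε > 0, ∀ a < psiLowF d Λ 1,
      (a - ε) * ((d : ℝ) - 1) ^ 2 ≤ psiLowF d (dualLattice d Λ) 1 := by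
    intro ε hε a ha
    have hev := (tendsto_neg_T d).eventually (eventually_lt_of_lt_liminf ha hFb)
    refine le_liminf_of_le hGc ?_
    have hg := (tendsto_sup d hd).comp (tendsto_neg_T d)
    filter_upwards [hev, mem_Tfilter d, (tendsto_sup d hd).eventually_ge_atTop 1,
      hg.eventually_ge_atTop (max 1 (C / ε))] with τ h1 hτ hf1 hg1
    simp only [Function.comp_apply] at hg1
    have hga := (le_max_left _ _).trans hg1
    have hgb := (le_max_right _ _).trans hg1
    have hgf : (⨆ i, (-τ) i) ≤ ((d : ℝ) - 1) * ⨆ i, τ i :=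
      ciSup_le fun i => (sup_bounds d hd τ hτ).1 i
    have hT := transfer_log d hd Λ hΛ τ hτ
    rw [← hC] at hT
    have hL := hLD τ hτ
    set g := ⨆ i, (-τ) i
    set f := ⨆ i, τ i
    set L := Lk d (dualLattice d Λ) τ 1
    have hgpos : 0 < g := by linarith
    rw [lt_div_iff₀ hgpos] at h1
    rw [div_le_iff₀ hε] at hgb
    rw [le_div_iff₀ (by linarith)]
    -- (a - ε) g ≤ L / (d-1)
    have h3 : (a - ε) * g ≤ L / ((d : ℝ) - 1) := by linarith
    rw [le_div_iff₀ (by linarith)] at h3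
    by_cases hs : 0 ≤ a - ε
    · have h4 : 0 ≤ (a - ε) * g * ((d : ℝ) - 1) := by positivity
      have h5 : L = 0 := le_antisymm hL (h4.trans h3)
      have h6 : a - ε ≤ 0 := by
        by_contra hc
        push Not at hc
        have : 0 < (a - ε) * g * ((d : ℝ) - 1) := by positivity
        linarith
      have h7 : a - ε = 0 := le_antisymm h6 hs
      rw [h7, h5]; simp
    · push Not at hs
      have h4 : (a - ε) * (((d : ℝ) - 1) * f) ≤ (a - ε) * g :=
        mul_le_mul_of_nonpos_left hgf hs.le
      have h5 := mul_le_mul_of_nonneg_right h4 (show 0 ≤ (d : ℝ) - 1 by linarith)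
      linarith
  apply le_of_forall_pos_le_add
  intro δ hδ
  have hq : 0 < ((d : ℝ) - 1) ^ 2 := by positivity
  have := key (δ / ((d : ℝ) - 1) ^ 2 / 2) (by positivity)
    (psiLowF d Λ 1 - δ / ((d : ℝ) - 1) ^ 2 / 2) (by
      have : 0 < δ / ((d : ℝ) - 1) ^ 2 / 2 := by positivity
      linarith)
  have e : (psiLowF d Λ 1 - δ / ((d : ℝ) - 1) ^ 2 / 2 - δ / ((d : ℝ) - 1) ^ 2 / 2)
      * ((d : ℝ) - 1) ^ 2 = psiLowF d Λ 1 * ((d : ℝ) - 1) ^ 2 - δ := by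
    field_simp
    ring
  linarith
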